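/- Let $n \ge 2$ be an integer and define $\Gamma_- : (-1,1) \to \mathbb{R}$ by $$\Gamma_-(s) = \sqrt[n]{\frac{1+s}{1-s}}\;\exp\!\left(\frac{n-2}{n\sqrt{n-1}}\,\arctan\!\big(s\sqrt{n-1}\big)\right).$$ Then: (i) $\Gamma_-$ is differentiable on $(-1,1)$ with $$\Gamma_-'(s) = \Gamma_-(s)\cdot\frac{1+s^2}{(1-s^2)\,\big(1+(n-1)s^2\big)} > 0,$$ so $\Gamma_-$ is strictly increasing; (ii) $\Gamma_-$ maps $(-1,1)$ onto $(0,\infty)$; (iii) $\Gamma_-(0) = 1$ and $\Gamma_-(-s)\,\Gamma_-(s) = 1$ for all $s \in (-1,1)$. -/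

import Mathlib

/-- The function `Γ₋(s) = ((1+s)/(1-s))^(1/n) · exp( ((n-2)/(n√(n-1))) · arctan(s√(n-1)) )`,
meant for `-1 < s < 1` and `n ≥ 2`; the first factor is the `n`-th root of a positive real. -/
noncomputable def GammaMinus (n : ℕ) (s : ℝ) : ℝ :=
  ((1 + s) / (1 - s)) ^ (1 / (n : ℝ)) *
    Real.exp ((((n : ℝ) - 2) / ((n : ℝ) * Real.sqrt ((n : ℝ) - 1))) *
      Real.arctan (s * Real.sqrt ((n : ℝ) - 1)))

/-!
The logarithm of `((1 + s) / (1 - s)) ^ a * exp (b * arctan (s * c))` is odd in `s`, with derivative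
`2 * a / (1 - s ^ 2) + b * c / (1 + (s * c) ^ 2)`. For the coefficients of `Γ₋` these two terms are
the partial fraction decomposition of `(1 + s ^ 2) / ((1 - s ^ 2) * (1 + (n - 1) * s ^ 2))`. The
exponential factor has positive limits at `-1` and `1`, so when `0 < a` the power alone produces the
limits `0` and `∞` there.
-/

open Filter Set Topology

/-- The family containing `Γ₋`, with the exponent `a`, the amplitude `b` and the frequency `c` taken
as independent parameters. It is meant for `-1 < s < 1`. -/
noncomputable def cayleyArctan (a b c s : ℝ) : ℝ :=
  ((1 + s) / (1 - s)) ^ a * Real.exp (b * Real.arctan (s * c))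

section CayleyArctan

variable (a b c : ℝ) {s : ℝ}

theorem cayleyArctan_zero : cayleyArctan a b c 0 = 1 := by
  simp [cayleyArctan]

theorem cayleyArctan_pos (hs : s ∈ Ioo (-1) 1) : 0 < cayleyArctan a b c s := by
  have hadd : 0 < 1 + s := by linarith [hs.1]
  have hsub : 0 < 1 - s := by linarith [hs.2]
  unfold cayleyArctan
  positivity

theorem cayleyArctan_neg (hs : s ∈ Ioo (-1) 1) :
    cayleyArctan a b c (-s) = (cayleyArctan a b c s)⁻¹ := by
  have hratio : 0 ≤ (1 + s) / (1 - s) := div_nonneg (by linarith [hs.1]) (by linarith [hs.2])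
  have hinv : (1 + -s) / (1 - -s) = ((1 + s) / (1 - s))⁻¹ := by
    rw [inv_div, ← sub_eq_add_neg, sub_neg_eq_add]
  rw [cayleyArctan, cayleyArctan, hinv, Real.inv_rpow hratio, neg_mul, Real.arctan_neg, mul_neg,
    Real.exp_neg, mul_inv]

theorem hasDerivAt_one_add_div_one_sub_rpow (hs : s ∈ Ioo (-1) 1) :
    HasDerivAt (fun x : ℝ => ((1 + x) / (1 - x)) ^ a)
      (((1 + s) / (1 - s)) ^ a * (2 * a / (1 - s ^ 2))) s := by
  have hadd : 0 < 1 + s := by linarith [hs.1]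
  have hsub : 0 < 1 - s := by linarith [hs.2]
  have hratio : HasDerivAt (fun x : ℝ => (1 + x) / (1 - x)) (2 / (1 - s) ^ 2) s :=
    (((hasDerivAt_id' s).const_add 1).div ((hasDerivAt_id' s).const_sub 1) hsub.ne').congr_deriv
      (by ring)
  refine (hratio.rpow_const (.inl (div_pos hadd hsub).ne')).congr_deriv ?_
  rw [Real.rpow_sub_one (div_pos hadd hsub).ne', show 1 - s ^ 2 = (1 + s) * (1 - s) by ring]
  field_simp

theorem hasDerivAt_exp_mul_arctan_mul (s : ℝ) :
    HasDerivAt (fun x : ℝ => Real.exp (b * Real.arctan (x * c)))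
      (Real.exp (b * Real.arctan (s * c)) * (b * c / (1 + (s * c) ^ 2))) s :=
  ((hasDerivAt_mul_const c).arctan.const_mul b).exp.congr_deriv (by ring)

theorem hasDerivAt_cayleyArctan (hs : s ∈ Ioo (-1) 1) :
    HasDerivAt (cayleyArctan a b c)
      (cayleyArctan a b c s * (2 * a / (1 - s ^ 2) + b * c / (1 + (s * c) ^ 2))) s :=
  ((hasDerivAt_one_add_div_one_sub_rpow a hs).mul (hasDerivAt_exp_mul_arctan_mul b c s)).congr_deriv
    (by unfold cayleyArctan; ring)

theorem continuousOn_cayleyArctan : ContinuousOn (cayleyArctan a b c) (Ioo (-1) 1) :=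
  fun _ hs => (hasDerivAt_cayleyArctan a b c hs).continuousAt.continuousWithinAt

variable {a}

theorem tendsto_cayleyArctan_neg_one (ha : 0 < a) :
    Tendsto (cayleyArctan a b c) (𝓝 (-1)) (𝓝 0) := by
  have hratio : ContinuousAt (fun s : ℝ => (1 + s) / (1 - s)) (-1) := by
    fun_prop (disch := norm_num)
  have hcont : ContinuousAt (cayleyArctan a b c) (-1) :=
    (hratio.rpow_const (.inr ha.le)).mul (hasDerivAt_exp_mul_arctan_mul b c (-1)).continuousAt
  have hvalue : cayleyArctan a b c (-1) = 0 := by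
    simp [cayleyArctan, Real.zero_rpow ha.ne']
  exact hvalue ▸ hcont.tendsto

theorem tendsto_one_add_div_one_sub_atTop :
    Tendsto (fun s : ℝ => (1 + s) / (1 - s)) (𝓝[<] 1) atTop := by
  have hnum : Tendsto (fun s : ℝ => 1 + s) (𝓝[<] 1) (𝓝 (1 + 1)) :=
    (by fun_prop : Continuous fun s : ℝ => 1 + s).continuousWithinAt
  have hden : Tendsto (fun s : ℝ => 1 - s) (𝓝[<] 1) (𝓝[>] 0) := by
    refine tendsto_nhdsWithin_iff.2 ⟨?_, ?_⟩
    · simpa using ((by fun_prop : Continuous fun s : ℝ => 1 - s).continuousWithinAt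
        (s := Iio 1) (x := 1)).tendsto
    · filter_upwards [self_mem_nhdsWithin] with s (hs : s < 1) using sub_pos.2 hs
  exact (hnum.pos_mul_atTop (by norm_num) (tendsto_inv_nhdsGT_zero.comp hden)).congr
    fun s => (div_eq_mul_inv (1 + s) (1 - s)).symm

theorem tendsto_cayleyArctan_one (ha : 0 < a) :
    Tendsto (cayleyArctan a b c) (𝓝[<] 1) atTop :=
  ((tendsto_rpow_atTop ha).comp tendsto_one_add_div_one_sub_atTop).atTop_mul_pos
    (Real.exp_pos _) (hasDerivAt_exp_mul_arctan_mul b c 1).continuousAt.continuousWithinAt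

theorem image_cayleyArctan_Ioo (ha : 0 < a) :
    cayleyArctan a b c '' Ioo (-1) 1 = Ioi 0 := by
  refine Subset.antisymm (image_subset_iff.2 fun s hs => cayleyArctan_pos a b c hs) ?_
  have hright : 𝓝[>] (-1 : ℝ) ≤ 𝓟 (Ioo (-1) 1) :=
    le_principal_iff.2 (Ioo_mem_nhdsGT (by norm_num))
  have hleft : 𝓝[<] (1 : ℝ) ≤ 𝓟 (Ioo (-1) 1) :=
    le_principal_iff.2 (Ioo_mem_nhdsLT (by norm_num))
  exact isPreconnected_Ioo.intermediate_value_Ioi hright hleft (continuousOn_cayleyArctan a b c)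
    ((tendsto_cayleyArctan_neg_one b c ha).mono_left nhdsWithin_le_nhds)
    (tendsto_cayleyArctan_one b c ha)

end CayleyArctan

/-- The function `Γ₋` with the integer `n` replaced by a real parameter `ν`, meant for `1 < ν`. -/
noncomputable def realGammaMinus (ν : ℝ) : ℝ → ℝ :=
  cayleyArctan (1 / ν) ((ν - 2) / (ν * √(ν - 1))) √(ν - 1)

section RealGammaMinus

variable {ν s : ℝ}

theorem add_div_eq_one_add_sq_div (hν : ν ≠ 0) (hsub : 1 - s ^ 2 ≠ 0)
    (hadd : 1 + (ν - 1) * s ^ 2 ≠ 0) :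
    2 * (1 / ν) / (1 - s ^ 2) + (ν - 2) / ν / (1 + (ν - 1) * s ^ 2) =
      (1 + s ^ 2) / ((1 - s ^ 2) * (1 + (ν - 1) * s ^ 2)) := by
  rw [mul_one_div, div_div, div_div, div_add_div _ _ (mul_ne_zero hν hsub) (mul_ne_zero hν hadd),
    div_eq_div_iff (mul_ne_zero (mul_ne_zero hν hsub) (mul_ne_zero hν hadd))
      (mul_ne_zero hsub hadd)]
  ring

theorem one_sub_sq_pos (hs : s ∈ Ioo (-1) 1) : 0 < 1 - s ^ 2 :=
  sub_pos.2 ((sq_lt_one_iff_abs_lt_one s).2 (abs_lt.2 hs))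

theorem one_add_sub_one_mul_sq_pos (hν : 1 ≤ ν) (s : ℝ) : 0 < 1 + (ν - 1) * s ^ 2 :=
  add_pos_of_pos_of_nonneg one_pos (mul_nonneg (sub_nonneg.2 hν) (sq_nonneg s))

theorem hasDerivAt_realGammaMinus (hν : 1 < ν) (hs : s ∈ Ioo (-1) 1) :
    HasDerivAt (realGammaMinus ν)
      (realGammaMinus ν s * ((1 + s ^ 2) / ((1 - s ^ 2) * (1 + (ν - 1) * s ^ 2)))) s := by
  have hroot : √(ν - 1) ≠ 0 := (Real.sqrt_pos.2 (sub_pos.2 hν)).ne'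
  have hsq : (s * √(ν - 1)) ^ 2 = (ν - 1) * s ^ 2 := by
    rw [mul_pow, Real.sq_sqrt (sub_pos.2 hν).le, mul_comm]
  have hcoeff : (ν - 2) / (ν * √(ν - 1)) * √(ν - 1) = (ν - 2) / ν := by
    field_simp
  refine (hasDerivAt_cayleyArctan _ _ _ hs).congr_deriv ?_
  rw [hsq, hcoeff, add_div_eq_one_add_sq_div (by positivity) (one_sub_sq_pos hs).ne'
    (one_add_sub_one_mul_sq_pos hν.le s).ne', realGammaMinus]

theorem deriv_realGammaMinus_pos (hν : 1 < ν) (hs : s ∈ Ioo (-1) 1) :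
    0 < deriv (realGammaMinus ν) s := by
  rw [(hasDerivAt_realGammaMinus hν hs).deriv]
  exact mul_pos (cayleyArctan_pos _ _ _ hs) (div_pos (by positivity)
    (mul_pos (one_sub_sq_pos hs) (one_add_sub_one_mul_sq_pos hν.le s)))

theorem strictMonoOn_realGammaMinus (hν : 1 < ν) :
    StrictMonoOn (realGammaMinus ν) (Ioo (-1) 1) :=
  strictMonoOn_of_deriv_pos (convex_Ioo _ _) (continuousOn_cayleyArctan _ _ _) fun _ hs =>
    deriv_realGammaMinus_pos hν (interior_subset hs)

theorem realGammaMinus_neg_mul_self (ν : ℝ) (hs : s ∈ Ioo (-1) 1) :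
    realGammaMinus ν (-s) * realGammaMinus ν s = 1 := by
  rw [realGammaMinus, cayleyArctan_neg _ _ _ hs, inv_mul_cancel₀ (cayleyArctan_pos _ _ _ hs).ne']

theorem GammaMinus_eq_realGammaMinus (n : ℕ) : GammaMinus n = realGammaMinus n :=
  rfl

end RealGammaMinus

theorem stmt8_general (ν : ℝ) (hν : 1 < ν) :
    (∀ s ∈ Ioo (-1 : ℝ) 1,
        HasDerivAt (realGammaMinus ν)
          (realGammaMinus ν s * ((1 + s ^ 2) / ((1 - s ^ 2) * (1 + (ν - 1) * s ^ 2)))) s ∧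
        0 < realGammaMinus ν s * ((1 + s ^ 2) / ((1 - s ^ 2) * (1 + (ν - 1) * s ^ 2)))) ∧
    StrictMonoOn (realGammaMinus ν) (Ioo (-1 : ℝ) 1) ∧
    realGammaMinus ν '' Ioo (-1 : ℝ) 1 = Ioi 0 ∧
    realGammaMinus ν 0 = 1 ∧
    ∀ s ∈ Ioo (-1 : ℝ) 1, realGammaMinus ν (-s) * realGammaMinus ν s = 1 :=
  ⟨fun _ hs =>
      have hderiv := hasDerivAt_realGammaMinus hν hs
      ⟨hderiv, hderiv.deriv ▸ deriv_realGammaMinus_pos hν hs⟩,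
    strictMonoOn_realGammaMinus hν, image_cayleyArctan_Ioo _ _ (by positivity),
    cayleyArctan_zero _ _ _, fun _ hs => realGammaMinus_neg_mul_self ν hs⟩

theorem stmt8 (n : ℕ) (hn : 2 ≤ n) :
    (∀ s ∈ Set.Ioo (-1 : ℝ) 1,
        HasDerivAt (GammaMinus n)
          (GammaMinus n s * ((1 + s ^ 2) / ((1 - s ^ 2) * (1 + ((n : ℝ) - 1) * s ^ 2)))) s ∧
        0 < GammaMinus n s * ((1 + s ^ 2) / ((1 - s ^ 2) * (1 + ((n : ℝ) - 1) * s ^ 2)))) ∧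
    StrictMonoOn (GammaMinus n) (Set.Ioo (-1 : ℝ) 1) ∧
    GammaMinus n '' Set.Ioo (-1 : ℝ) 1 = Set.Ioi 0 ∧
    GammaMinus n 0 = 1 ∧
    ∀ s ∈ Set.Ioo (-1 : ℝ) 1, GammaMinus n (-s) * GammaMinus n s = 1 := by
  rw [GammaMinus_eq_realGammaMinus]
  exact stmt8_general n (by exact_mod_cast hn)
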